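/- Let n ≥ 2 and d ≥ 1, let a_1,…,a_n ∈ {0,1}^d be pairwise distinct and b_1,…,b_n ∈ {0,1}^d be pairwise distinct, and let t ≥ 1 be an integer. If for all i,j ∈ {1,…,n} the Hamming distance satisfies Hamming(a_i,b_j) ≥ t, then val(A,B) ≤ val(A) + val(B) + 200·n^6·exp(−100·(ln n)·t). -/

import Mathlib

open Finset

/-- The Gaussian kernel with parameter `C = 100 ln n`. -/
noncomputable def gaussK (n d : ℕ) (x y : Fin d → ℝ) : ℝ :=
  Real.exp (-(100 * Real.log n) * ∑ l, (x l - y l) ^ 2)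

/-- `val(A)`: the optimal value of the hard-margin SVM (without bias) on the
points `a_1, …, a_n`, all with label `+1`. -/
noncomputable def svmVal (n d : ℕ) (a : Fin n → Fin d → ℝ) : ℝ :=
  sInf {v : ℝ | ∃ α : Fin n → ℝ, (∀ i, 0 ≤ α i) ∧
    (∀ i, 1 ≤ ∑ j, α j * gaussK n d (a i) (a j)) ∧
    v = (1 / 2) * ∑ i, ∑ j, α i * α j * gaussK n d (a i) (a j)}

/-- `val(A,B)`: the optimal value of the hard-margin SVM (without bias) on the
points `a_1, …, a_n` with label `+1` and `b_1, …, b_n` with label `-1`. -/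
noncomputable def svmValAB (n d : ℕ) (a b : Fin n → Fin d → ℝ) : ℝ :=
  sInf {v : ℝ | ∃ α β : Fin n → ℝ, (∀ i, 0 ≤ α i) ∧ (∀ i, 0 ≤ β i) ∧
    (∀ i, 1 ≤ ∑ j, α j * gaussK n d (a i) (a j) - ∑ j, β j * gaussK n d (a i) (b j)) ∧
    (∀ i, 1 ≤ ∑ j, β j * gaussK n d (b i) (b j) - ∑ j, α j * gaussK n d (b i) (a j)) ∧
    v = (1 / 2) * ∑ i, ∑ j, α i * α j * gaussK n d (a i) (a j)
      + (1 / 2) * ∑ i, ∑ j, β i * β j * gaussK n d (b i) (b j)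
      - ∑ i, ∑ j, α i * β j * gaussK n d (a i) (b j)}

/-!
Labelling the points of `B` by `-1` turns the problem for `A ∪ B` into the one-class problem for the
signed Gram matrix `[K, -C; -Cᵀ, L]`, where `K` and `L` are the Gram matrices of `A` and `B`.  A
feasible `α` for `K` satisfies `∑ αᵢ ≤ α ⬝ᵥ K *ᵥ α`, so its total mass is at most twice its
objective, and `α = 1` shows that only objectives up to `n² / 2` matter.  If all entries of `C` are
at most `δ`, the cross terms then lower the margins of a pair of feasible points by at most
`ε = n² δ`.  Scaling the pair by `1 + 2ε` restores feasibility at an additional cost of at most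
`6 ε n²`.
-/

open Matrix

theorem mulVec_apply_le_mul_sum {R ι κ : Type*} [Semiring R] [PartialOrder R] [IsOrderedRing R]
    [Fintype κ] {C : Matrix ι κ R} {β : κ → R} {δ : R} {i : ι} (hC : ∀ j, C i j ≤ δ)
    (hβ : 0 ≤ β) : (C *ᵥ β) i ≤ δ * ∑ j, β j := by
  rw [mul_sum]
  exact sum_le_sum fun j _ => mul_le_mul_of_nonneg_right (hC j) (hβ j)

section HardMargin

variable {ι κ : Type*} [Fintype ι] [Fintype κ]

/-- Feasibility for the hard-margin SVM (without bias) with signed Gram matrix `M`, whose `(i, j)`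
entry is the product of the two labels with the kernel value of the two points: the dual weights
are nonnegative and every point has margin at least `1`. -/
def HardMarginFeasible (M : Matrix ι ι ℝ) (α : ι → ℝ) : Prop :=
  0 ≤ α ∧ 1 ≤ M *ᵥ α

/-- The hard-margin SVM objective for the signed Gram matrix `M`: half the squared norm of the
separating vector with dual weights `α`. -/
noncomputable def hardMarginObjective (M : Matrix ι ι ℝ) (α : ι → ℝ) : ℝ :=
  α ⬝ᵥ M *ᵥ α / 2

/-- The optimal value of the hard-margin SVM with signed Gram matrix `M`; it is `0` when the problem
is infeasible. -/
noncomputable def hardMarginVal (M : Matrix ι ι ℝ) : ℝ :=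
  sInf (hardMarginObjective M '' {α | HardMarginFeasible M α})

variable {M K : Matrix ι ι ℝ} {L : Matrix κ κ ℝ} {C : Matrix ι κ ℝ}
  {u α : ι → ℝ} {v β : κ → ℝ} {s x δ ε : ℝ}

theorem HardMarginFeasible.objective_nonneg (hα : HardMarginFeasible M α) :
    0 ≤ hardMarginObjective M α :=
  div_nonneg (dotProduct_nonneg_of_nonneg hα.1 (zero_le_one.trans hα.2)) zero_le_two

theorem HardMarginFeasible.sum_le_two_mul_objective (hα : HardMarginFeasible M α) :
    ∑ i, α i ≤ 2 * hardMarginObjective M α :=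
  calc ∑ i, α i = α ⬝ᵥ 1 := (dotProduct_one α).symm
    _ ≤ α ⬝ᵥ M *ᵥ α := dotProduct_le_dotProduct_of_nonneg_left hα.2 hα.1
    _ = 2 * hardMarginObjective M α := (mul_div_cancel₀ _ two_ne_zero).symm

theorem HardMarginFeasible.val_le (hα : HardMarginFeasible M α) :
    hardMarginVal M ≤ hardMarginObjective M α := by
  refine csInf_le ⟨0, ?_⟩ (Set.mem_image_of_mem _ hα)
  rintro _ ⟨γ, hγ, rfl⟩
  exact hγ.objective_nonneg

theorem HardMarginFeasible.le_val (hu : HardMarginFeasible M u)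
    (h : ∀ α, HardMarginFeasible M α → hardMarginObjective M α ≤ hardMarginObjective M u →
      x ≤ hardMarginObjective M α) :
    x ≤ hardMarginVal M := by
  refine le_csInf ⟨_, u, hu, rfl⟩ ?_
  rintro _ ⟨α, hα, rfl⟩
  obtain hle | hle := le_total (hardMarginObjective M α) (hardMarginObjective M u)
  · exact h α hα hle
  · exact (h u hu le_rfl).trans hle

theorem hardMarginObjective_smul (M : Matrix ι ι ℝ) (c : ℝ) (α : ι → ℝ) :
    hardMarginObjective M (c • α) = c ^ 2 * hardMarginObjective M α := by
  simp only [hardMarginObjective, mulVec_smul, smul_dotProduct, dotProduct_smul, smul_eq_mul]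
  ring

theorem hardMarginFeasible_smul (hα : 0 ≤ α) (hε : 0 ≤ ε) (hε' : ε ≤ 1 / 2)
    (hM : ∀ i, 1 - ε ≤ (M *ᵥ α) i) :
    HardMarginFeasible M ((1 + 2 * ε) • α) := by
  refine ⟨smul_nonneg (by positivity) hα, fun i => ?_⟩
  calc (1 : ℝ) ≤ (1 + 2 * ε) * (1 - ε) := by nlinarith
    _ ≤ (1 + 2 * ε) * (M *ᵥ α) i := by gcongr; exact hM i
    _ = (M *ᵥ ((1 + 2 * ε) • α)) i := by rw [mulVec_smul, Pi.smul_apply, smul_eq_mul]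

theorem hardMarginFeasible_one (hM : ∀ i j, 0 ≤ M i j) (hdiag : ∀ i, 1 ≤ M i i) :
    HardMarginFeasible M 1 := by
  refine ⟨zero_le_one, fun i => ?_⟩
  rw [mulVec, dotProduct_one]
  exact (hdiag i).trans (single_le_sum (fun j _ => hM i j) (mem_univ i))

theorem two_mul_hardMarginObjective_one_le (hM : ∀ i j, M i j ≤ 1) :
    2 * hardMarginObjective M 1 ≤ (Fintype.card ι : ℝ) ^ 2 :=
  calc 2 * hardMarginObjective M 1 = ∑ i, ∑ j, M i j := by
        simp only [hardMarginObjective, one_dotProduct, mulVec, dotProduct_one,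
          mul_div_cancel₀, ne_eq, OfNat.ofNat_ne_zero, not_false_eq_true]
    _ ≤ ∑ _i : ι, ∑ _j : ι, (1 : ℝ) := sum_le_sum fun i _ => sum_le_sum fun j _ => hM i j
    _ = (Fintype.card ι : ℝ) ^ 2 := by simp [sq]

theorem HardMarginFeasible.one_sub_le_mulVec_sub (hα : HardMarginFeasible K α)
    (hβ : HardMarginFeasible L β) (hβs : 2 * hardMarginObjective L β ≤ s) (hδ : 0 ≤ δ)
    (hC : ∀ i j, C i j ≤ δ) (i : ι) :
    1 - s * δ ≤ (K *ᵥ α - C *ᵥ β) i := by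
  have hcross : (C *ᵥ β) i ≤ s * δ :=
    calc (C *ᵥ β) i ≤ δ * ∑ j, β j := mulVec_apply_le_mul_sum (hC i) hβ.1
      _ ≤ δ * s := by gcongr; exact hβ.sum_le_two_mul_objective.trans hβs
      _ = s * δ := mul_comm δ s
  exact sub_le_sub (hα.2 i) hcross

theorem fromBlocks_neg_mulVec_sumElim (K : Matrix ι ι ℝ) (L : Matrix κ κ ℝ) (C : Matrix ι κ ℝ)
    (α : ι → ℝ) (β : κ → ℝ) :
    fromBlocks K (-C) (-Cᵀ) L *ᵥ Sum.elim α β =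
      Sum.elim (K *ᵥ α - C *ᵥ β) (L *ᵥ β - Cᵀ *ᵥ α) := by
  rw [fromBlocks_mulVec, Sum.elim_comp_inl, Sum.elim_comp_inr, neg_mulVec, neg_mulVec,
    ← sub_eq_add_neg, neg_add_eq_sub]

theorem hardMarginFeasible_fromBlocks_neg :
    HardMarginFeasible (fromBlocks K (-C) (-Cᵀ) L) (Sum.elim α β) ↔
      0 ≤ α ∧ 0 ≤ β ∧ 1 ≤ K *ᵥ α - C *ᵥ β ∧ 1 ≤ L *ᵥ β - Cᵀ *ᵥ α := by
  simp only [HardMarginFeasible, fromBlocks_neg_mulVec_sumElim, Pi.le_def, Sum.forall,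
    Sum.elim_inl, Sum.elim_inr, Pi.zero_apply, Pi.one_apply, and_assoc]

theorem hardMarginObjective_fromBlocks_neg (K : Matrix ι ι ℝ) (L : Matrix κ κ ℝ)
    (C : Matrix ι κ ℝ) (α : ι → ℝ) (β : κ → ℝ) :
    hardMarginObjective (fromBlocks K (-C) (-Cᵀ) L) (Sum.elim α β) =
      hardMarginObjective K α + hardMarginObjective L β - α ⬝ᵥ C *ᵥ β := by
  have hsymm : β ⬝ᵥ Cᵀ *ᵥ α = α ⬝ᵥ C *ᵥ β := by
    rw [mulVec_transpose, dotProduct_comm, dotProduct_mulVec]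
  simp only [hardMarginObjective, fromBlocks_neg_mulVec_sumElim, sumElim_dotProduct_sumElim,
    dotProduct_sub, hsymm]
  ring

theorem HardMarginFeasible.val_fromBlocks_neg_le (hα : HardMarginFeasible K α)
    (hβ : HardMarginFeasible L β) (hαs : 2 * hardMarginObjective K α ≤ s)
    (hβs : 2 * hardMarginObjective L β ≤ s) (hδ : 0 ≤ δ) (hC₀ : ∀ i j, 0 ≤ C i j)
    (hCδ : ∀ i j, C i j ≤ δ) (hsδ : s * δ ≤ 1 / 2) :
    hardMarginVal (fromBlocks K (-C) (-Cᵀ) L) ≤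
      hardMarginObjective K α + hardMarginObjective L β + 6 * s ^ 2 * δ := by
  set X := hardMarginObjective K α + hardMarginObjective L β
  have hX₀ : 0 ≤ X := add_nonneg hα.objective_nonneg hβ.objective_nonneg
  have hXs : X ≤ s := by linarith
  set ε := s * δ with hε_def
  have hs : 0 ≤ s := (mul_nonneg zero_le_two hα.objective_nonneg).trans hαs
  have hε : 0 ≤ ε := mul_nonneg hs hδ
  have hcross : 0 ≤ α ⬝ᵥ C *ᵥ β := dotProduct_nonneg_of_nonneg hα.1 fun i =>
    dotProduct_nonneg_of_nonneg (hC₀ i) hβ.1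
  have hmargin : ∀ i, 1 - ε ≤ (fromBlocks K (-C) (-Cᵀ) L *ᵥ Sum.elim α β) i := by
    rw [fromBlocks_neg_mulVec_sumElim]
    exact Sum.rec (hα.one_sub_le_mulVec_sub hβ hβs hδ hCδ)
      (hβ.one_sub_le_mulVec_sub hα hαs hδ fun j i => hCδ i j)
  have hfeas := hardMarginFeasible_smul (Sum.rec hα.1 hβ.1) hε hsδ hmargin
  calc hardMarginVal (fromBlocks K (-C) (-Cᵀ) L)
      ≤ (1 + 2 * ε) ^ 2 * (X - α ⬝ᵥ C *ᵥ β) := by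
        simpa only [hardMarginObjective_smul, hardMarginObjective_fromBlocks_neg] using hfeas.val_le
    _ ≤ (1 + 2 * ε) ^ 2 * X := by gcongr; exact sub_le_self X hcross
    _ = X + 4 * (1 + ε) * ε * X := by ring
    _ ≤ X + 4 * (1 + 1 / 2) * ε * s := by gcongr
    _ = X + 6 * s ^ 2 * δ := by rw [hε_def]; ring

theorem hardMarginVal_fromBlocks_neg_le (hu : HardMarginFeasible K u)
    (hv : HardMarginFeasible L v) (hus : 2 * hardMarginObjective K u ≤ s)
    (hvs : 2 * hardMarginObjective L v ≤ s) (hδ : 0 ≤ δ) (hC₀ : ∀ i j, 0 ≤ C i j)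
    (hCδ : ∀ i j, C i j ≤ δ) (hsδ : s * δ ≤ 1 / 2) :
    hardMarginVal (fromBlocks K (-C) (-Cᵀ) L) ≤
      hardMarginVal K + hardMarginVal L + 6 * s ^ 2 * δ := by
  rw [add_assoc, ← sub_le_iff_le_add]
  refine hu.le_val fun α hα hαu => ?_
  rw [sub_le_comm, ← sub_le_iff_le_add]
  refine hv.le_val fun β hβ hβv => ?_
  rw [sub_le_iff_le_add, sub_le_iff_le_add', ← add_assoc]
  exact hα.val_fromBlocks_neg_le hβ (by linarith) (by linarith) hδ hC₀ hCδ hsδ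

end HardMargin

section Gaussian

variable {n d : ℕ}

theorem gaussK_comm (x y : Fin d → ℝ) : gaussK n d x y = gaussK n d y x := by
  simp only [gaussK, sub_sq_comm]

theorem gaussK_pos (x y : Fin d → ℝ) : 0 < gaussK n d x y :=
  Real.exp_pos _

theorem gaussK_self (x : Fin d → ℝ) : gaussK n d x x = 1 := by
  simp [gaussK]

theorem gaussK_le_exp {x y : Fin d → ℝ} {t : ℝ} (h : t ≤ ∑ l, (x l - y l) ^ 2) :
    gaussK n d x y ≤ Real.exp (-(100 * Real.log n) * t) :=
  Real.exp_le_exp.mpr <| mul_le_mul_of_nonpos_left h <|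
    neg_nonpos.mpr <| mul_nonneg (by norm_num) (Real.log_natCast_nonneg n)

theorem gaussK_le_one (x y : Fin d → ℝ) : gaussK n d x y ≤ 1 := by
  simpa using gaussK_le_exp (n := n) (sum_nonneg fun l _ => sq_nonneg (x l - y l))

variable {ι κ : Type*}

/-- The matrix of Gaussian kernel values between the points `x i` and the points `y j`. -/
noncomputable def gaussGram (n d : ℕ) (x : ι → Fin d → ℝ) (y : κ → Fin d → ℝ) : Matrix ι κ ℝ :=
  of fun i j => gaussK n d (x i) (y j)

theorem gaussGram_transpose (x : ι → Fin d → ℝ) (y : κ → Fin d → ℝ) :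
    (gaussGram n d x y)ᵀ = gaussGram n d y x :=
  Matrix.ext fun j i => gaussK_comm (x i) (y j)

theorem gaussGram_mulVec [Fintype κ] (x : ι → Fin d → ℝ) (y : κ → Fin d → ℝ) (β : κ → ℝ) (i : ι) :
    (gaussGram n d x y *ᵥ β) i = ∑ j, β j * gaussK n d (x i) (y j) :=
  sum_congr rfl fun _ _ => mul_comm _ _

theorem dotProduct_gaussGram_mulVec [Fintype ι] [Fintype κ] (x : ι → Fin d → ℝ)
    (y : κ → Fin d → ℝ) (α : ι → ℝ) (β : κ → ℝ) :
    α ⬝ᵥ gaussGram n d x y *ᵥ β = ∑ i, ∑ j, α i * β j * gaussK n d (x i) (y j) := by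
  simp only [dotProduct, gaussGram_mulVec, mul_sum, mul_assoc]

theorem hardMarginFeasible_gaussGram_one [Fintype ι] (x : ι → Fin d → ℝ) :
    HardMarginFeasible (gaussGram n d x x) 1 :=
  hardMarginFeasible_one (fun _ _ => (gaussK_pos _ _).le) fun i => (gaussK_self (x i)).ge

theorem two_mul_hardMarginObjective_gaussGram_one_le [Fintype ι] (x : ι → Fin d → ℝ) :
    2 * hardMarginObjective (gaussGram n d x x) 1 ≤ (Fintype.card ι : ℝ) ^ 2 :=
  two_mul_hardMarginObjective_one_le fun i j => gaussK_le_one (x i) (x j)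

theorem svmVal_eq_hardMarginVal (a : Fin n → Fin d → ℝ) :
    svmVal n d a = hardMarginVal (gaussGram n d a a) := by
  refine congrArg sInf (Set.ext fun v => exists_congr fun α => ?_)
  simp only [Set.mem_ofPred_eq, HardMarginFeasible, hardMarginObjective, Pi.le_def, Pi.zero_apply,
    Pi.one_apply, gaussGram_mulVec, dotProduct_gaussGram_mulVec, and_assoc, eq_comm (a := v),
    one_div_mul_eq_div]

theorem svmValAB_eq_hardMarginVal (a b : Fin n → Fin d → ℝ) :
    svmValAB n d a b = hardMarginVal (fromBlocks (gaussGram n d a a) (-gaussGram n d a b)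
      (-(gaussGram n d a b)ᵀ) (gaussGram n d b b)) := by
  refine congrArg sInf (Set.ext fun v => ?_)
  rw [Set.mem_image, (Equiv.sumArrowEquivProdArrow (Fin n) (Fin n) ℝ).symm.surjective.exists,
    Prod.exists]
  simp only [Set.mem_ofPred_eq, Equiv.sumArrowEquivProdArrow, Equiv.coe_fn_symm_mk,
    hardMarginFeasible_fromBlocks_neg, hardMarginObjective_fromBlocks_neg]
  simp only [gaussGram_transpose, Pi.le_def, Pi.zero_apply, Pi.one_apply, Pi.sub_apply,
    hardMarginObjective, gaussGram_mulVec, dotProduct_gaussGram_mulVec, and_assoc,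
    eq_comm (a := v), one_div_mul_eq_div]

theorem sq_mul_exp_le_half (hn : 2 ≤ n) {t : ℝ} (ht : 3 / 100 ≤ t) :
    (n : ℝ) ^ 2 * Real.exp (-(100 * Real.log n) * t) ≤ 1 / 2 := by
  have hn₂ : (2 : ℝ) ≤ n := by exact_mod_cast hn
  have hn₀ : (0 : ℝ) < n := by linarith
  have hlog : 0 ≤ Real.log n := Real.log_natCast_nonneg n
  calc (n : ℝ) ^ 2 * Real.exp (-(100 * Real.log n) * t)
      ≤ (n : ℝ) ^ 2 * Real.exp (-(3 * Real.log n)) := by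
        gcongr
        nlinarith
    _ = (n : ℝ) ^ 2 * ((n : ℝ) ^ 3)⁻¹ := by
        rw [Real.exp_neg, ← Nat.cast_ofNat (n := 3), Real.exp_nat_mul, Real.exp_log hn₀]
    _ = 1 / n := by field_simp
    _ ≤ 1 / 2 := by gcongr

end Gaussian

theorem svm_no_case_general {n d : ℕ} (hn : 2 ≤ n) (a b : Fin n → Fin d → ℝ) {t : ℝ}
    (ht : 3 / 100 ≤ t) (hfar : ∀ i j, t ≤ ∑ l, (a i l - b j l) ^ 2) :
    svmValAB n d a b ≤ svmVal n d a + svmVal n d b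
      + 6 * (n : ℝ) ^ 4 * Real.exp (-(100 * Real.log n) * t) := by
  have hone : ∀ x : Fin n → Fin d → ℝ,
      2 * hardMarginObjective (gaussGram n d x x) 1 ≤ (n : ℝ) ^ 2 := fun x => by
    simpa only [Fintype.card_fin] using two_mul_hardMarginObjective_gaussGram_one_le (n := n) x
  have hbound := hardMarginVal_fromBlocks_neg_le (C := gaussGram n d a b)
    (hardMarginFeasible_gaussGram_one a) (hardMarginFeasible_gaussGram_one b) (hone a) (hone b)
    (Real.exp_nonneg _) (fun i j => (gaussK_pos (a i) (b j)).le)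
    (fun i j => gaussK_le_exp (hfar i j)) (sq_mul_exp_le_half hn ht)
  rwa [← pow_mul, ← svmVal_eq_hardMarginVal, ← svmVal_eq_hardMarginVal,
    ← svmValAB_eq_hardMarginVal] at hbound

/-- NO case: if all pairs are at Hamming distance at least `t`, then
`val(A,B) ≤ val(A) + val(B) + 200 n⁶ exp(−100 (ln n) t)`. -/
theorem svm_no_case (n d : ℕ) (hn : 2 ≤ n) (hd : 1 ≤ d)
    (a b : Fin n → Fin d → ℝ)
    (ha01 : ∀ i l, a i l = 0 ∨ a i l = 1)
    (hb01 : ∀ i l, b i l = 0 ∨ b i l = 1)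
    (hainj : Function.Injective a) (hbinj : Function.Injective b)
    (t : ℕ) (ht : 1 ≤ t)
    (hfar : ∀ i j, (t : ℝ) ≤ ∑ l, (a i l - b j l) ^ 2) :
    svmValAB n d a b ≤ svmVal n d a + svmVal n d b
      + 200 * (n : ℝ) ^ 6 * Real.exp (-(100 * Real.log n) * t) := by
  have ht' : (3 / 100 : ℝ) ≤ t := le_trans (by norm_num) (Nat.one_le_cast.mpr ht)
  have hn₁ : (1 : ℝ) ≤ n := Nat.one_le_cast.mpr (one_le_two.trans hn)
  exact (svm_no_case_general hn a b ht' hfar).trans (by gcongr <;> norm_num)
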